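/- arXiv:math/0512215 — 6 statements merged into one kernel-verified Lean document; each statement's English description precedes it below -/
import Mathlib

section
/- Let A be an associative unital algebra over a field K of characteristic zero and let δ be a K-derivation of A such that δ(x) = 1 for some x ∈ A. Let A^δ := ker δ (a subalgebra of A). Then: (i) the inner derivation ad(x) : a ↦ xa − ax maps A^δ into itself; (ii) for every n ≥ 0, ker(δ^{n+1}) = A^δ ⊕ A^δ·x ⊕ ⋯ ⊕ A^δ·x^n = A^δ ⊕ x·A^δ ⊕ ⋯ ⊕ x^n·A^δ (internal direct sums of K-subspaces); (iii) consequently N(δ,A) := {a ∈ A : δ^k(a) = 0 for some k ≥ 0} equals the internal direct sum ⊕_{i≥0} A^δ·x^i, i.e. N(δ,A) is a free left A^δ-module with basis {x^i : i ≥ 0} (and likewise a free right A^δ-module). -/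
/-!
The powers of `x` behave under `δ` like those of a variable under differentiation: for `c ∈ ker δ`,
`δ (c xⁱ⁺¹) = (i + 1) c xⁱ`, and likewise for `xⁱ⁺¹ c`. Both sides of the theorem are therefore
instances of one linear-algebra situation, `IsPowerLadder`: linear maps `M i` with `M 0 = id` and
`δ (M (i + 1) c) = (i + 1) M i c` on `ker δ`. There `δⁱ (M i c) = i! c` and `δʲ (M i c) = 0` for
`j > i`. Characteristic zero makes `i!` invertible, so

* `M i` is injective on `ker δ`, and applying `δᵐ` to a vanishing sum with top index `m` forces the
  top term to vanish, which gives independence (`IsPowerLadder.independent`);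
* if `δⁿ⁺² a = 0`, then subtracting `M (n+1) (δⁿ⁺¹ a / (n+1)!)` from `a` lands in `ker δⁿ⁺¹`, which
  gives the description of the kernels by induction (`IsPowerLadder.ker_pow`).
-/

/-- A `K`-derivation of a (possibly noncommutative) `K`-algebra `A`:
a `K`-linear map satisfying the Leibniz rule. -/
def IsDerivation {K A : Type*} [CommRing K] [Ring A] [Algebra K A]
    (δ : A →ₗ[K] A) : Prop :=
  ∀ a b : A, δ (a * b) = δ a * b + a * δ b

/-- A family of linear maps `M i` imitating `c ↦ c xⁱ` on `ker δ`: `M 0` is the identity there and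
`δ` lowers the index by one, with factor `i + 1`. -/
structure IsPowerLadder {K A : Type*} [Field K] [AddCommGroup A] [Module K A]
    (δ : A →ₗ[K] A) (M : ℕ → A →ₗ[K] A) : Prop where
  zero : ∀ c ∈ LinearMap.ker δ, M 0 c = c
  succ : ∀ i : ℕ, ∀ c ∈ LinearMap.ker δ, δ (M (i + 1) c) = ((i : K) + 1) • M i c

namespace IsPowerLadder

variable {K A : Type*} [Field K] [AddCommGroup A] [Module K A]
  {δ : A →ₗ[K] A} {M : ℕ → A →ₗ[K] A}

theorem pow_apply_self (h : IsPowerLadder δ M) (i : ℕ) {c : A} (hc : c ∈ LinearMap.ker δ) :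
    (δ ^ i) (M i c) = (i.factorial : K) • c := by
  induction i with
  | zero => simp [h.zero c hc]
  | succ i ih =>
    rw [pow_succ, Module.End.mul_apply, h.succ i c hc, map_smul, ih, smul_smul,
      Nat.factorial_succ]
    push_cast
    rfl

theorem pow_apply_of_lt (h : IsPowerLadder δ M) {i j : ℕ} (hij : i < j) {c : A}
    (hc : c ∈ LinearMap.ker δ) : (δ ^ j) (M i c) = 0 := by
  obtain ⟨k, rfl⟩ := Nat.exists_eq_add_of_lt hij
  rw [show i + k + 1 = k + (1 + i) by ring, pow_add, pow_add, pow_one, Module.End.mul_apply,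
    Module.End.mul_apply, h.pow_apply_self i hc, map_smul, LinearMap.mem_ker.mp hc, smul_zero,
    map_zero]

variable [CharZero K]

theorem eq_zero (h : IsPowerLadder δ M) {i : ℕ} {c : A} (hc : c ∈ LinearMap.ker δ)
    (h0 : (δ ^ i) (M i c) = 0) : c = 0 := by
  rw [h.pow_apply_self i hc] at h0
  exact (smul_eq_zero.mp h0).resolve_left (Nat.cast_ne_zero.mpr i.factorial_ne_zero)

theorem ker_pow (h : IsPowerLadder δ M) (n : ℕ) :
    LinearMap.ker (δ ^ (n + 1)) =
      ⨆ i ∈ Finset.range (n + 1), Submodule.map (M i) (LinearMap.ker δ) := by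
  apply le_antisymm
  · induction n with
    | zero =>
      intro a ha
      have ha' : a ∈ LinearMap.ker δ := by simpa using ha
      refine Submodule.mem_iSup_of_mem 0 (Submodule.mem_iSup_of_mem (by simp) ?_)
      exact ⟨a, ha', h.zero a ha'⟩
    | succ n ih =>
      intro a ha
      have hc : ((n + 1).factorial : K)⁻¹ • (δ ^ (n + 1)) a ∈ LinearMap.ker δ := by
        apply Submodule.smul_mem
        rw [LinearMap.mem_ker, ← Module.End.mul_apply, ← pow_succ']
        exact ha
      have hdiff : a - M (n + 1) (((n + 1).factorial : K)⁻¹ • (δ ^ (n + 1)) a) ∈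
          LinearMap.ker (δ ^ (n + 1)) := by
        rw [LinearMap.mem_ker, map_sub, h.pow_apply_self (n + 1) hc, smul_inv_smul₀, sub_self]
        exact Nat.cast_ne_zero.mpr (n + 1).factorial_ne_zero
      rw [← sub_add_cancel a (M (n + 1) (((n + 1).factorial : K)⁻¹ • (δ ^ (n + 1)) a))]
      refine Submodule.add_mem _ ?_ ?_
      · refine (ih.trans (biSup_mono fun i hi => ?_)) hdiff
        simp only [Finset.mem_range] at hi ⊢
        omega
      · exact Submodule.mem_iSup_of_mem (n + 1)
          (Submodule.mem_iSup_of_mem (by simp) ⟨_, hc, rfl⟩)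
  · refine iSup₂_le fun i hi => ?_
    rintro _ ⟨c, hc, rfl⟩
    exact h.pow_apply_of_lt (Finset.mem_range.mp hi) hc

theorem nilpotent_eq (h : IsPowerLadder δ M) :
    {a : A | ∃ k : ℕ, (δ ^ k) a = 0} =
      (⨆ i : ℕ, Submodule.map (M i) (LinearMap.ker δ) : Submodule K A) := by
  ext a
  constructor
  · rintro ⟨k, hk⟩
    have ha : a ∈ LinearMap.ker (δ ^ (k + 1)) := by
      rw [LinearMap.mem_ker, pow_succ', Module.End.mul_apply, hk, map_zero]
    rw [h.ker_pow k] at ha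
    exact (iSup₂_le fun i _ =>
      le_iSup (fun i => Submodule.map (M i) (LinearMap.ker δ)) i) ha
  · intro ha
    refine Submodule.iSup_induction _ (motive := fun a => ∃ k : ℕ, (δ ^ k) a = 0) ha ?_ ?_ ?_
    · rintro i _ ⟨c, hc, rfl⟩
      exact ⟨i + 1, h.pow_apply_of_lt i.lt_succ_self hc⟩
    · exact ⟨0, map_zero _⟩
    · rintro a b ⟨k, hk⟩ ⟨l, hl⟩
      refine ⟨k + l, ?_⟩
      rw [map_add, pow_add, Module.End.mul_apply, Module.End.mul_apply, hl, map_zero,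
        ← Module.End.mul_apply, ← pow_add, add_comm k l, pow_add, Module.End.mul_apply, hk,
        map_zero, add_zero]

theorem independent (h : IsPowerLadder δ M) :
    iSupIndep (fun i : ℕ => Submodule.map (M i) (LinearMap.ker δ)) := by
  rw [iSupIndep_iff_finsetSum_eq_zero_imp_eq_zero]
  intro s
  induction s using Finset.induction_on_max with
  | empty => simp
  | insert m s hm ih =>
    intro v hv hsum
    have hms : m ∉ s := fun hmem => lt_irrefl _ (hm m hmem)
    rw [Finset.sum_insert hms] at hsum
    -- `δᵐ` annihilates every term of index below the top index `m`.
    have hlow : (δ ^ m) (∑ i ∈ s, v i) = 0 := by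
      rw [map_sum]
      refine Finset.sum_eq_zero fun i hi => ?_
      obtain ⟨c, hc, hcv⟩ := hv i (Finset.mem_insert_of_mem hi)
      rw [← hcv]
      exact h.pow_apply_of_lt (hm i hi) hc
    have htop : v m = 0 := by
      obtain ⟨c, hc, hcv⟩ := hv m (Finset.mem_insert_self m s)
      have hz := congrArg (δ ^ m) hsum
      rw [map_add, hlow, add_zero, map_zero, ← hcv] at hz
      rw [← hcv, h.eq_zero hc hz, map_zero]
    rw [htop, zero_add] at hsum
    intro i hi
    rcases Finset.mem_insert.mp hi with rfl | hi
    · exact htop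
    · exact ih v (fun j hj => hv j (Finset.mem_insert_of_mem hj)) hsum i hi

end IsPowerLadder

namespace IsDerivation

variable {K A : Type*} [Field K] [Ring A] [Algebra K A] {δ : A →ₗ[K] A} {x : A}

theorem map_pow_succ (hδ : IsDerivation δ) (hx : δ x = 1) (i : ℕ) :
    δ (x ^ (i + 1)) = ((i : K) + 1) • x ^ i := by
  induction i with
  | zero => simp [hx]
  | succ i ih =>
    rw [pow_succ, hδ, ih, hx, smul_mul_assoc, ← pow_succ, mul_one]
    push_cast
    rw [add_smul ((i : K) + 1) 1, one_smul]

theorem ladder_mulRight (hδ : IsDerivation δ) (hx : δ x = 1) :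
    IsPowerLadder δ (fun i => LinearMap.mulRight K (x ^ i)) where
  zero c _ := by simp
  succ i c hc := by
    rw [LinearMap.mulRight_apply, LinearMap.mulRight_apply, hδ, LinearMap.mem_ker.mp hc,
      hδ.map_pow_succ hx, zero_mul, zero_add, mul_smul_comm]

theorem ladder_mulLeft (hδ : IsDerivation δ) (hx : δ x = 1) :
    IsPowerLadder δ (fun i => LinearMap.mulLeft K (x ^ i)) where
  zero c _ := by simp
  succ i c hc := by
    rw [LinearMap.mulLeft_apply, LinearMap.mulLeft_apply, hδ, LinearMap.mem_ker.mp hc,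
      hδ.map_pow_succ hx, mul_zero, add_zero, smul_mul_assoc]

end IsDerivation

/-- **Lemma (Ore-extension structure of `N(δ,A)`).**
If `δ` is a `K`-derivation of `A` (char `K = 0`) with `δ x = 1`, then
(i) the inner derivation `ad x` preserves `A^δ = ker δ`;
(ii) for every `n`, `ker (δ^{n+1}) = A^δ ⊕ A^δ x ⊕ ⋯ ⊕ A^δ xⁿ = A^δ ⊕ x A^δ ⊕ ⋯ ⊕ xⁿ A^δ`;
(iii) `N(δ,A) = ⊕_{i ≥ 0} A^δ xⁱ = ⊕_{i ≥ 0} xⁱ A^δ`, a free left (and right) `A^δ`-module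
with basis `{xⁱ}`. -/
theorem ore_structure_of_kernel_powers
    {K A : Type*} [Field K] [CharZero K] [Ring A] [Algebra K A]
    (δ : A →ₗ[K] A) (hδ : IsDerivation δ) (x : A) (hx : δ x = 1) :
    -- (i) `ad x` maps `A^δ` into itself
    (∀ a ∈ LinearMap.ker δ, x * a - a * x ∈ LinearMap.ker δ) ∧
    -- (ii) kernels of powers of `δ`: right-multiplication version
    (∀ n : ℕ, LinearMap.ker (δ ^ (n + 1)) =
      ⨆ i ∈ Finset.range (n + 1),
        Submodule.map (LinearMap.mulRight K (x ^ i)) (LinearMap.ker δ)) ∧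
    -- (ii) kernels of powers of `δ`: left-multiplication version
    (∀ n : ℕ, LinearMap.ker (δ ^ (n + 1)) =
      ⨆ i ∈ Finset.range (n + 1),
        Submodule.map (LinearMap.mulLeft K (x ^ i)) (LinearMap.ker δ)) ∧
    -- (iii) `N(δ,A)` is the internal direct sum `⊕_{i ≥ 0} A^δ xⁱ = ⊕_{i ≥ 0} xⁱ A^δ`
    ({a : A | ∃ k : ℕ, (δ ^ k) a = 0} =
      (⨆ i : ℕ, Submodule.map (LinearMap.mulRight K (x ^ i)) (LinearMap.ker δ) : Submodule K A)) ∧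
    ({a : A | ∃ k : ℕ, (δ ^ k) a = 0} =
      (⨆ i : ℕ, Submodule.map (LinearMap.mulLeft K (x ^ i)) (LinearMap.ker δ) : Submodule K A)) ∧
    -- directness of the sums (the `{xⁱ}` are a basis over `A^δ`)
    iSupIndep (fun i : ℕ => Submodule.map (LinearMap.mulRight K (x ^ i)) (LinearMap.ker δ)) ∧
    iSupIndep (fun i : ℕ => Submodule.map (LinearMap.mulLeft K (x ^ i)) (LinearMap.ker δ)) ∧
    -- freeness: `c ↦ c xⁱ` and `c ↦ xⁱ c` are injective on `A^δ`
    (∀ i : ℕ, ∀ c ∈ LinearMap.ker δ, c * x ^ i = 0 → c = 0) ∧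
    (∀ i : ℕ, ∀ c ∈ LinearMap.ker δ, x ^ i * c = 0 → c = 0) := by
  have hR := hδ.ladder_mulRight hx
  have hL := hδ.ladder_mulLeft hx
  refine ⟨fun a ha => ?_, hR.ker_pow, hL.ker_pow, hR.nilpotent_eq, hL.nilpotent_eq,
    hR.independent, hL.independent, fun i c hc h0 => ?_, fun i c hc h0 => ?_⟩
  · rw [LinearMap.mem_ker] at ha ⊢
    rw [map_sub, hδ, hδ, ha, hx]
    simp
  · refine hR.eq_zero (i := i) hc ?_
    rw [LinearMap.mulRight_apply, h0, map_zero]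
  · refine hL.eq_zero (i := i) hc ?_
    rw [LinearMap.mulLeft_apply, h0, map_zero]
end

section
/- Let A be an associative unital algebra over a field K of characteristic zero, let δ be a locally nilpotent K-derivation of A, and let x ∈ A satisfy δ(x) = 1. Define the K-linear map φ : A → A by φ(a) := Σ_{i≥0} (−1)^i (x^i/i!)·δ^i(a) (a finite sum for each a, by local nilpotency). Then: (1) φ(a·c) = φ(a)·c for all a ∈ A and c ∈ A^δ := ker δ (φ is a homomorphism of right A^δ-modules); (2) A = A^δ ⊕ xA as K-vector spaces and φ is the projection onto A^δ along xA; in particular the image of φ is A^δ and φ(y) = y for all y ∈ A^δ; (3) φ(x^i) = 0 for all i ≥ 1; (4) if x lies in the centre of A then φ is a K-algebra homomorphism. -/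
section

variable {K A : Type*} [Field K] [Ring A] [Algebra K A]

/-- The coefficient `(-1)ⁱ / i!` of `xⁱ δⁱ` in `φ`. -/
def projCoeff (K : Type*) [Field K] (i : ℕ) : K := (-1 : K) ^ i * ((i.factorial : K)⁻¹)

theorem projCoeff_succ [CharZero K] (i : ℕ) :
    projCoeff K (i + 1) * ((i + 1 : ℕ) : K) = -projCoeff K i := by
  have h1 : ((i + 1 : ℕ) : K) ≠ 0 := Nat.cast_ne_zero.mpr i.succ_ne_zero
  have h2 : (i.factorial : K) ≠ 0 := Nat.cast_ne_zero.mpr i.factorial_ne_zero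
  unfold projCoeff
  rw [Nat.factorial_succ, Nat.cast_mul, pow_succ]
  field_simp

theorem IsDerivation.map_one_eq_zero {δ : A →ₗ[K] A} (hδ : IsDerivation δ) : δ 1 = 0 := by
  simpa using hδ 1 1

theorem delta_pow_x {δ : A →ₗ[K] A} (hδ : IsDerivation δ) {x : A} (hx : δ x = 1) (n : ℕ) :
    δ (x ^ (n + 1)) = ((n + 1 : ℕ) : K) • x ^ n := by
  induction n with
  | zero => simp [hx]
  | succ n ih =>
    rw [pow_succ, hδ, ih, hx, smul_mul_assoc, ← pow_succ, mul_one, Nat.cast_succ (n + 1),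
      add_smul, one_smul]

theorem delta_iterate_x_mul {δ : A →ₗ[K] A} (hδ : IsDerivation δ) {x : A} (hx : δ x = 1)
    (b : A) (n : ℕ) :
    (δ ^ (n + 1)) (x * b) = x * (δ ^ (n + 1)) b + ((n + 1 : ℕ) : K) • (δ ^ n) b := by
  induction n with
  | zero => simp [hδ x b, hx, add_comm]
  | succ n ih =>
    rw [pow_succ' δ (n + 1), Module.End.mul_apply, ih, map_add, map_smul, hδ, hx, one_mul,
      ← Module.End.mul_apply, ← Module.End.mul_apply, ← pow_succ' δ (n + 1), ← pow_succ' δ n,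
      Nat.cast_succ (n + 1), add_smul, one_smul]
    abel

theorem delta_partial_sum [CharZero K] {δ : A →ₗ[K] A} (hδ : IsDerivation δ) {x : A}
    (hx : δ x = 1) (a : A) (n : ℕ) :
    δ (∑ i ∈ Finset.range (n + 1), projCoeff K i • (x ^ i * (δ ^ i) a)) =
      projCoeff K n • (x ^ n * (δ ^ (n + 1)) a) := by
  induction n with
  | zero => simp [projCoeff]
  | succ n ih =>
    rw [Finset.sum_range_succ, map_add, ih, map_smul, hδ, delta_pow_x hδ hx,
      ← Module.End.mul_apply, ← pow_succ' δ (n + 1), smul_add, smul_mul_assoc, smul_smul,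
      projCoeff_succ, neg_smul]
    abel

theorem partial_sum_x_mul [CharZero K] {δ : A →ₗ[K] A} (hδ : IsDerivation δ) {x : A}
    (hx : δ x = 1) (b : A) (n : ℕ) :
    ∑ i ∈ Finset.range (n + 1), projCoeff K i • (x ^ i * (δ ^ i) (x * b)) =
      projCoeff K n • (x ^ (n + 1) * (δ ^ n) b) := by
  induction n with
  | zero => simp [projCoeff]
  | succ n ih =>
    rw [Finset.sum_range_succ, ih, delta_iterate_x_mul hδ hx, mul_add, smul_add, mul_smul_comm,
      smul_smul, projCoeff_succ, neg_smul, ← mul_assoc, ← pow_succ]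
    abel

theorem sub_partial_sum (δ : A →ₗ[K] A) (x a : A) (n : ℕ) :
    ∃ b, a - ∑ i ∈ Finset.range (n + 1), projCoeff K i • (x ^ i * (δ ^ i) a) = x * b := by
  refine ⟨-∑ i ∈ Finset.range n, projCoeff K (i + 1) • (x ^ i * (δ ^ (i + 1)) a), ?_⟩
  rw [Finset.sum_range_succ', mul_neg, Finset.mul_sum]
  simp only [mul_smul_comm, ← mul_assoc, ← pow_succ']
  simp [projCoeff]

end

/-- **Theorem.** Let `δ` be a locally nilpotent `K`-derivation (char `K = 0`) with
`δ x = 1`, and let `φ = Σ_{i≥0} (-1)ⁱ (xⁱ/i!) δⁱ` (characterized below by its value on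
each `a`, the sum being finite by local nilpotency). Then
(1) `φ` is a homomorphism of right `A^δ`-modules;
(2) `A = A^δ ⊕ xA` and `φ` is the projection onto `A^δ` along `xA`; in particular
    `im φ = A^δ` and `φ y = y` for `y ∈ A^δ`;
(3) `φ (xⁱ) = 0` for `i ≥ 1`;
(4) if `x` is central then `φ` is a `K`-algebra homomorphism. -/
theorem projection_onto_constants
    {K A : Type*} [Field K] [CharZero K] [Ring A] [Algebra K A]
    (δ : A →ₗ[K] A) (hδ : IsDerivation δ)
    (hln : ∀ a : A, ∃ k : ℕ, (δ ^ k) a = 0)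
    (x : A) (hx : δ x = 1)
    (φ : A →ₗ[K] A)
    (hφ : ∀ (a : A) (N : ℕ), (δ ^ N) a = 0 →
      φ a = ∑ i ∈ Finset.range N,
        ((-1 : K) ^ i * ((i.factorial : K)⁻¹)) • (x ^ i * (δ ^ i) a)) :
    -- (1) right `A^δ`-module homomorphism
    (∀ (a c : A), δ c = 0 → φ (a * c) = φ a * c) ∧
    -- (2) `φ` is the projection of `A = A^δ ⊕ xA` onto `A^δ`:
    (∀ a : A, δ (φ a) = 0 ∧ (∃ b : A, a - φ a = x * b) ∧
      (∀ (y b : A), δ y = 0 → a = y + x * b → y = φ a)) ∧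
    (Set.range φ = {a : A | δ a = 0}) ∧
    (∀ y : A, δ y = 0 → φ y = y) ∧
    -- (3)
    (∀ i : ℕ, 1 ≤ i → φ (x ^ i) = 0) ∧
    -- (4)
    ((∀ a : A, x * a = a * x) → (φ 1 = 1 ∧ ∀ a b : A, φ (a * b) = φ a * φ b)) := by
  have hφ' : ∀ (a : A) (N : ℕ), (δ ^ N) a = 0 →
      φ a = ∑ i ∈ Finset.range N, projCoeff K i • (x ^ i * (δ ^ i) a) := hφ
  have hsucc : ∀ (a : A) (N : ℕ), (δ ^ N) a = 0 → (δ ^ (N + 1)) a = 0 := by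
    intro a N h
    rw [pow_succ', Module.End.mul_apply, h, map_zero]
  have hconst : ∀ a, δ (φ a) = 0 := by
    intro a
    obtain ⟨N, hN⟩ := hln a
    rw [hφ' a (N + 1) (hsucc a N hN), delta_partial_sum hδ hx, hsucc a N hN, mul_zero, smul_zero]
  have hxb : ∀ b, φ (x * b) = 0 := by
    intro b
    obtain ⟨N, hN⟩ := hln b
    have h : (δ ^ (N + 1)) (x * b) = 0 := by
      rw [delta_iterate_x_mul hδ hx, hsucc b N hN, hN, mul_zero, smul_zero, add_zero]
    rw [hφ' _ (N + 1) h, partial_sum_x_mul hδ hx, hN, mul_zero, smul_zero]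
  have hsub : ∀ a, ∃ b, a - φ a = x * b := by
    intro a
    obtain ⟨N, hN⟩ := hln a
    rw [hφ' a (N + 1) (hsucc a N hN)]
    exact sub_partial_sum δ x a N
  have hid : ∀ y, δ y = 0 → φ y = y := by
    intro y hy
    rw [hφ' y 1 (by simpa using hy)]
    simp [projCoeff]
  have huniq : ∀ a y b : A, δ y = 0 → a = y + x * b → y = φ a := by
    rintro a y b hy rfl
    rw [map_add, hid y hy, hxb, add_zero]
  have hmul : ∀ a b, δ a = 0 → δ b = 0 → δ (a * b) = 0 := by
    intro a b ha hb
    rw [hδ, ha, hb, zero_mul, mul_zero, add_zero]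
  refine ⟨?_, fun a => ⟨hconst a, hsub a, huniq a⟩, ?_, hid, ?_, ?_⟩
  · intro a c hc
    obtain ⟨b, hb⟩ := hsub a
    refine (huniq _ _ (b * c) (hmul _ _ (hconst a) hc) ?_).symm
    rw [← mul_assoc, ← hb, sub_mul, add_sub_cancel]
  · ext y
    exact ⟨by rintro ⟨a, rfl⟩; exact hconst a, fun hy => ⟨y, hid y hy⟩⟩
  · intro i hi
    obtain ⟨j, rfl⟩ := Nat.exists_eq_add_of_le' hi
    rw [pow_succ']
    exact hxb _
  · intro hc
    refine ⟨hid 1 hδ.map_one_eq_zero, fun a b => ?_⟩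
    obtain ⟨a', ha⟩ := hsub a
    obtain ⟨b', hb⟩ := hsub b
    refine (huniq _ _ (φ a * b' + a' * b) (hmul _ _ (hconst a) (hconst b)) ?_).symm
    -- Centrality moves `x` past `φ a` in `φ a * (x * b')`.
    rw [mul_add, ← mul_assoc, hc (φ a), mul_assoc, ← hb, ← mul_assoc x, ← ha]
    noncomm_ring
end

section
/- Let K be a field of characteristic zero, m ≥ 1, and let σ be a K-algebra automorphism of the polynomial ring P_m = K[X_1, …, X_m]. Define deg σ := max_{1≤i≤m} totalDegree(σ(X_i)). Then deg σ^{-1} ≤ (deg σ)^{m−1}, i.e. max_{1≤i≤m} totalDegree(σ^{-1}(X_i)) ≤ (max_{1≤i≤m} totalDegree(σ(X_i)))^{m−1}. -/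
/-!
The proof is a dimension count that replaces the usual appeal to Bézout's theorem.

Let `d = deg σ`, `G = σ⁻¹(X i)`, `e = totalDegree G`, and let `β` be the exponent of the leading
monomial of `G` for the degree-lexicographic order, so `|β| = e`. The products `G ^ b * X ^ α` with
`α ≱ β` have pairwise distinct leading exponents `b β + α`, so they are linearly independent
(`linearIndependent_of_injective_degree`, `smul_add_injective`), and hence so are their images
`σ (G ^ b * X ^ α) = X_i ^ b * σ(X) ^ α`. These images have total degree at most `b + d |α|`.

Write `c n = (n + m).choose m` for the number of monomials of degree at most `n`. There are at
least `c n - c (n - e)` exponents `α ≱ β` with `|α| ≤ n`. Counting the products above with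
`b + d |α| ≤ M d`, where for each `n < M` the `d` values `d (M - 1 - n) ≤ b < d (M - n)` allow all
`|α| ≤ n`, gives a telescoping sum, and with `M = e + k` the bound `d e c(k) ≤ c((e + k) d)`.
Letting `k → ∞` and comparing leading terms in `k` yields `d e ≤ d ^ m`, so `e ≤ d ^ (m - 1)`.
-/

open MvPolynomial

namespace InverseDegree

open Finset

/-- The exponents `α` in `m` variables with `|α| ≤ n`. -/
noncomputable def ball (m n : ℕ) : Finset (Fin m →₀ ℕ) :=
  (range (n + 1)).biUnion fun k => finsuppAntidiag univ k

lemma mem_ball {m n : ℕ} {α : Fin m →₀ ℕ} : α ∈ ball m n ↔ α.degree ≤ n := by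
  simp [ball, mem_finsuppAntidiag, Finsupp.degree_eq_sum]

lemma card_ball {m : ℕ} (hm : 1 ≤ m) (n : ℕ) : (ball m n).card = (n + m).choose m := by
  obtain ⟨k, rfl⟩ : ∃ k, m = k + 1 := ⟨m - 1, by omega⟩
  rw [ball, card_biUnion]
  · rw [← add_assoc, ← Nat.sum_range_add_choose]
    refine sum_congr rfl fun i _ => ?_
    rw [card_finsuppAntidiag_nat_eq_choose, card_univ, Fintype.card_fin,
      show k + 1 + i - 1 = i + k by omega, Nat.choose_symm_add]
  · intro i _ j _ hij
    rw [Function.onFun, Finset.disjoint_left]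
    intro a ha hb
    rw [mem_finsuppAntidiag] at ha hb
    exact hij (ha.1.symm.trans hb.1)

/-- The exponents `α` with `|α| ≤ n` such that `X ^ β` does not divide `X ^ α`. -/
noncomputable def reduced {m : ℕ} (β : Fin m →₀ ℕ) (n : ℕ) : Finset (Fin m →₀ ℕ) :=
  open Classical in (ball m n).filter fun α => ¬ β ≤ α

lemma card_reduced_of_lt {m : ℕ} (β : Fin m →₀ ℕ) {n : ℕ} (h : n < β.degree) :
    (ball m n).card ≤ (reduced β n).card := by
  classical
  refine card_le_card fun α hα => ?_
  rw [reduced, mem_filter]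
  refine ⟨hα, fun hle => ?_⟩
  have := Finsupp.degree_mono hle
  have := mem_ball.1 hα
  omega

lemma card_reduced_add {m : ℕ} (β : Fin m →₀ ℕ) (j : ℕ) :
    (ball m (β.degree + j)).card ≤ (reduced β (β.degree + j)).card + (ball m j).card := by
  classical
  rw [← card_filter_add_card_filter_not (s := ball m (β.degree + j)) (fun α => β ≤ α), add_comm,
    reduced]
  gcongr ?_ + ?_
  · apply le_of_eq
    congr!
  -- `α ↦ α - β` maps the multiples of `X ^ β` injectively into the smaller ball.
  · refine card_le_card_of_injOn (fun α => α - β) ?_ ?_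
    · intro α hα
      rw [mem_coe, mem_filter, mem_ball] at hα
      change α - β ∈ ball m j
      rw [mem_ball]
      have h : (α - β).degree + β.degree = α.degree := by
        rw [← map_add, tsub_add_cancel_of_le hα.2]
      omega
    · intro α hα α' hα' h
      rw [mem_coe, mem_filter] at hα hα'
      exact (tsub_left_inj hα.2 hα'.2).1 h

/-- The telescoping of `∑ n < e + k, (c n - c (n - e))`, bounded below by its first surviving
term taken `e` times. -/
lemma sum_card_reduced {m : ℕ} (β : Fin m →₀ ℕ) (k : ℕ) :
    β.degree * (ball m k).card ≤ ∑ n ∈ range (β.degree + k), (reduced β n).card := by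
  have h1 : ∑ n ∈ range (β.degree + k), (ball m n).card ≤
      ∑ n ∈ range (β.degree + k), (reduced β n).card + ∑ j ∈ range k, (ball m j).card := by
    rw [sum_range_add, sum_range_add, add_assoc, ← sum_add_distrib]
    gcongr ?_ + ?_
    · exact sum_le_sum fun n hn => card_reduced_of_lt β (mem_range.1 hn)
    · exact sum_le_sum fun j _ => card_reduced_add β j
  have h2 : ∑ j ∈ range k, (ball m j).card + β.degree * (ball m k).card ≤
      ∑ n ∈ range (β.degree + k), (ball m n).card := by
    rw [add_comm β.degree k, sum_range_add]
    gcongr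
    rw [← smul_eq_mul]
    refine (le_of_eq (by simp)).trans (card_nsmul_le_sum (range β.degree) _ (ball m k).card ?_)
    intro j _
    refine card_le_card fun α hα => ?_
    rw [mem_ball] at hα ⊢
    omega
  omega

lemma linearIndependent_of_injective_degree {K s ι : Type*} [Field K] (o : MonomialOrder s)
    (v : ι → MvPolynomial s K) (h0 : ∀ i, v i ≠ 0)
    (hinj : Function.Injective fun i => o.degree (v i)) : LinearIndependent K v := by
  classical
  rw [linearIndependent_iff']
  intro t g hg
  by_contra! hne
  obtain ⟨i₁, hi₁, hgi₁⟩ := hne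
  -- Extract the coefficient at the largest leading exponent that occurs.
  obtain ⟨i₀, hi₀, hmax⟩ := exists_max_image (t.filter fun i => g i ≠ 0)
    (fun i => o.toSyn (o.degree (v i))) ⟨i₁, by simp [hi₁, hgi₁]⟩
  rw [mem_filter] at hi₀
  have hc := congrArg (coeff (o.degree (v i₀))) hg
  rw [coeff_sum, sum_eq_single i₀, coeff_smul, coeff_zero, smul_eq_mul] at hc
  · exact mul_ne_zero hi₀.2 (o.coeff_degree_ne_zero_iff.2 (h0 i₀)) hc
  · intro j hj hji
    rw [coeff_smul, smul_eq_mul]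
    by_cases hgj : g j = 0
    · rw [hgj, zero_mul]
    · rw [o.coeff_eq_zero_of_lt, mul_zero]
      refine lt_of_le_of_ne (hmax j (by simp [hj, hgj])) fun h => hji (hinj ?_)
      exact o.toSyn.injective h
  · exact fun h => absurd hi₀.1 h

/-- Division with remainder by `β`: `b β + α` with `α ≱ β` determines `b` and `α`. -/
lemma smul_add_injective {m : ℕ} {β α α' : Fin m →₀ ℕ} {b b' : ℕ} (hα : ¬ β ≤ α) (hα' : ¬ β ≤ α')
    (h : b • β + α = b' • β + α') : b = b' ∧ α = α' := by
  have key : ∀ {α α' : Fin m →₀ ℕ} {b b' : ℕ}, ¬ β ≤ α → b • β + α = b' • β + α' → ¬ b < b' := by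
    intro α α' b b' hα h hlt
    obtain ⟨t, rfl⟩ : ∃ t, b' = b + (t + 1) := ⟨b' - b - 1, by omega⟩
    rw [add_smul, add_assoc] at h
    apply hα
    rw [add_left_cancel h, add_smul, one_smul, add_comm (t • β), add_assoc]
    exact le_self_add
  have hb : b = b' := le_antisymm (not_lt.1 (key hα' h.symm)) (not_lt.1 (key hα h))
  subst hb
  exact ⟨rfl, add_left_cancel h⟩

lemma finrank_restrictTotalDegree {K : Type*} [Field K] (m N : ℕ) :
    Module.finrank K (restrictTotalDegree (Fin m) K N) = (ball m N).card := by
  rw [restrictTotalDegree, Module.finrank_eq_nat_card_basis (basisRestrictSupport K _),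
    show {n : Fin m →₀ ℕ | (n.sum fun _ e => e) ≤ N} = ball m N from
      Set.ext fun α => mem_ball.symm]
  simp

lemma totalDegree_map_le {K : Type*} [Field K] {m d : ℕ}
    (σ : MvPolynomial (Fin m) K ≃ₐ[K] MvPolynomial (Fin m) K)
    (hd : ∀ j, (σ (X j)).totalDegree ≤ d) (i : Fin m) (b : ℕ) (α : Fin m →₀ ℕ) :
    (σ (σ.symm (X i) ^ b * monomial α 1)).totalDegree ≤ b + d * α.degree := by
  rw [map_mul, map_pow, AlgEquiv.apply_symm_apply]
  refine (totalDegree_mul _ _).trans (add_le_add ?_ ?_)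
  · exact (totalDegree_pow _ _).trans (by simp)
  · rw [monomial_eq, C_1, one_mul, Finsupp.prod_fintype _ _ (by simp), map_prod]
    refine (totalDegree_finsetProd _ _).trans ?_
    rw [Finsupp.degree_eq_sum, mul_sum]
    refine sum_le_sum fun j _ => ?_
    rw [map_pow, mul_comm]
    exact (totalDegree_pow _ _).trans (Nat.mul_le_mul_left _ (hd j))

/-- The dimension count `d e c(k) ≤ c((e + k) d)`. -/
lemma count_bound {K : Type*} [Field K] {m d : ℕ}
    (σ : MvPolynomial (Fin m) K ≃ₐ[K] MvPolynomial (Fin m) K)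
    (hd : ∀ j, (σ (X j)).totalDegree ≤ d) (i : Fin m) (k : ℕ) :
    d * ((σ.symm (X i)).totalDegree * (ball m k).card) ≤
      (ball m (((σ.symm (X i)).totalDegree + k) * d)).card := by
  classical
  set G := σ.symm (X i) with hG
  have hG0 : G ≠ 0 := by simp [hG, X_ne_zero]
  set o : MonomialOrder (Fin m) := MonomialOrder.degLex
  set β := o.degree G with hβ
  have hβe : β.degree = G.totalDegree := degree_degLexDegree
  rw [← hβe]
  set M := β.degree + k with hM
  -- The triple `(n, r, α)` stands for the product with `b = d (M - 1 - n) + r`.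
  let T : Finset (Σ _ : ℕ, ℕ × (Fin m →₀ ℕ)) :=
    (range M).sigma fun n => range d ×ˢ reduced β n
  have hT : T.card = d * ∑ n ∈ range M, (reduced β n).card := by
    simp [T, card_sigma, mul_sum]
  let v : T → MvPolynomial (Fin m) K := fun x =>
    G ^ (d * (M - 1 - x.1.1) + x.1.2.1) * monomial x.1.2.2 1
  have hmem : ∀ x : T, x.1.1 < M ∧ x.1.2.1 < d ∧ x.1.2.2.degree ≤ x.1.1 ∧ ¬ β ≤ x.1.2.2 := by
    intro x
    have := x.2
    simpa [T, reduced, mem_ball] using this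
  have hmon : ∀ α : Fin m →₀ ℕ, (monomial α (1 : K)) ≠ 0 := fun α => by simp
  have hdeg : ∀ x : T, o.degree (v x) = (d * (M - 1 - x.1.1) + x.1.2.1) • β + x.1.2.2 := by
    intro x
    rw [o.degree_mul (pow_ne_zero _ hG0) (hmon _), o.degree_pow, o.degree_monomial,
      if_neg one_ne_zero]
  have hv : LinearIndependent K v := by
    refine linearIndependent_of_injective_degree o v
      (fun x => mul_ne_zero (pow_ne_zero _ hG0) (hmon _)) ?_
    intro x y hxy
    have hxy' : o.degree (v x) = o.degree (v y) := hxy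
    rw [hdeg, hdeg] at hxy'
    obtain ⟨hx1, hx2, -, hx4⟩ := hmem x
    obtain ⟨hy1, hy2, -, hy4⟩ := hmem y
    obtain ⟨hb, hα⟩ := smul_add_injective hx4 hy4 hxy'
    have hq := congrArg (· / d) hb
    have hr := congrArg (· % d) hb
    have hd0 : 0 < d := by omega
    simp only [Nat.mul_add_div hd0, Nat.div_eq_of_lt hx2, Nat.div_eq_of_lt hy2,
      Nat.mul_add_mod, Nat.mod_eq_of_lt hx2, Nat.mod_eq_of_lt hy2] at hq hr
    obtain ⟨⟨n, r, α⟩, hx⟩ := x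
    obtain ⟨⟨n', r', α'⟩, hy⟩ := y
    simp only at hq hr hα hx1 hy1
    have : n = n' := by omega
    subst this hr hα
    rfl
  have hσv : LinearIndependent K fun x => σ (v x) :=
    hv.map' σ.toLinearMap (LinearMap.ker_eq_bot.2 σ.injective)
  have hW : ∀ x, σ (v x) ∈ restrictTotalDegree (Fin m) K (M * d) := by
    intro x
    rw [mem_restrictTotalDegree]
    refine (totalDegree_map_le σ hd i _ _).trans ?_
    obtain ⟨hx1, hx2, hx3, -⟩ := hmem x
    obtain ⟨t, ht⟩ : ∃ t, M = x.1.1 + 1 + t := ⟨M - x.1.1 - 1, by omega⟩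
    rw [ht, show x.1.1 + 1 + t - 1 - x.1.1 = t by omega]
    nlinarith
  have hW' : LinearIndependent K
      (fun x => (⟨σ (v x), hW x⟩ : restrictTotalDegree (Fin m) K (M * d))) :=
    LinearIndependent.of_comp (Submodule.subtype _) hσv
  have hcard := hW'.fintype_card_le_finrank
  rw [finrank_restrictTotalDegree, Fintype.card_coe, hT] at hcard
  exact (Nat.mul_le_mul_left d (sum_card_reduced β k)).trans hcard

lemma le_pow_of_asymptotic {m d e A : ℕ}
    (h : ∀ k : ℕ, d * e * (k + 1) ^ m ≤ (A + d * k) ^ m) : d * e ≤ d ^ m := by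
  have ht := (tendsto_add_mul_div_add_mul_atTop_nhds (A : ℝ) 1 (d : ℝ) one_ne_zero).pow m
  rw [div_one] at ht
  have : ((d * e : ℕ) : ℝ) ≤ (d : ℝ) ^ m := by
    refine ge_of_tendsto' ht fun k => ?_
    rw [div_pow, le_div_iff₀ (by positivity)]
    have := h k
    rw [one_mul, add_comm (1 : ℝ)]
    exact_mod_cast this
  exact_mod_cast this

lemma totalDegree_symm_le {K : Type*} [Field K] {m d : ℕ} (hm : 1 ≤ m)
    (σ : MvPolynomial (Fin m) K ≃ₐ[K] MvPolynomial (Fin m) K)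
    (hd : ∀ j, (σ (X j)).totalDegree ≤ d) (i : Fin m) :
    (σ.symm (X i)).totalDegree ≤ d ^ (m - 1) := by
  -- An automorphism cannot send a variable to a constant.
  have hd0 : 0 < d := by
    by_contra h
    have h0 : (σ (X i)).totalDegree = 0 := by have := hd i; omega
    rw [totalDegree_eq_zero_iff_eq_C] at h0
    have h1 : X i = C (coeff 0 (σ (X i))) := by
      apply σ.injective
      rw [← algebraMap_eq, AlgEquiv.commutes, algebraMap_eq]
      exact h0
    have h2 := congrArg totalDegree h1
    simp at h2
  set e := (σ.symm (X i)).totalDegree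
  have hmain : d * e ≤ d ^ m := by
    refine le_pow_of_asymptotic (A := e * d + m) fun k => ?_
    have h := count_bound σ hd i k
    rw [card_ball hm, card_ball hm] at h
    -- Multiplying by `m!` turns the binomial coefficients into rising factorials.
    have h' := Nat.mul_le_mul_left m.factorial h
    have e1 := Nat.ascFactorial_eq_factorial_mul_choose k m
    have e2 := Nat.ascFactorial_eq_factorial_mul_choose ((e + k) * d) m
    calc d * e * (k + 1) ^ m ≤ d * e * (k + 1).ascFactorial m := by
          gcongr
          exact Nat.pow_succ_le_ascFactorial _ _
      _ = m.factorial * (d * (e * (k + m).choose m)) := by rw [e1]; ring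
      _ ≤ ((e + k) * d + 1).ascFactorial m := by rw [e2]; exact h'
      _ ≤ ((e + k) * d + m) ^ m := Nat.ascFactorial_le_pow_add _ _
      _ = (e * d + m + d * k) ^ m := by ring
  obtain ⟨n, rfl⟩ : ∃ n, m = n + 1 := ⟨m - 1, by omega⟩
  rw [pow_succ'] at hmain
  exact Nat.le_of_mul_le_mul_left hmain hd0

end InverseDegree

/-- **Theorem (Bass–Connell–Wright; Rusek–Winiarski).** For a `K`-algebra
automorphism `σ` of the polynomial algebra `P_m = K[X_1, …, X_m]` over a field
of characteristic zero (`m ≥ 1`), `deg σ⁻¹ ≤ (deg σ)^(m-1)`. -/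
theorem deg_inverse_polynomial_automorphism
    {K : Type*} [Field K] [CharZero K] (m : ℕ) (hm : 1 ≤ m)
    (σ : MvPolynomial (Fin m) K ≃ₐ[K] MvPolynomial (Fin m) K) :
    (Finset.univ.sup fun i => (σ.symm (X i)).totalDegree)
      ≤ (Finset.univ.sup fun i => (σ (X i)).totalDegree) ^ (m - 1) := by
  refine Finset.sup_le fun i _ => InverseDegree.totalDegree_symm_le hm σ (fun j => ?_) i
  exact Finset.le_sup (f := fun i => (σ (X i)).totalDegree) (Finset.mem_univ j)
end

section
/- Let K be a field of characteristic zero and let σ be a K-algebra endomorphism of the polynomial ring P_m = K[X_1, …, X_m] such that det(∂σ(X_i)/∂X_j) ∈ K∖{0} and σ(X_i) lies in the ideal (X_1, …, X_m) for every i. Let δ_1', …, δ_m' be the unique K-derivations of P_m satisfying δ_i'(σ(X_j)) = δ_{ij} for all i, j (they exist and are unique because the Jacobian matrix (∂σ(X_j)/∂X_k) is invertible over P_m). Then: (1) ∩_{i=1}^m ker δ_i' = K (the constant polynomials); (2) ∩_{i=1}^m N(δ_i', P_m) = σ(P_m), the image of σ, where N(δ, P_m) := {f ∈ P_m : δ^k(f)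 = 0 for some k ≥ 0}. -/
open MvPolynomial

/-!
Write `J` for the matrix with entries `J j k = ∂σ(X_j)/∂X_k` and `A` for the matrix with entries
`A i k = δ'_i(X_k)`. The chain rule turns `δ'_i(σ(X_j)) = δ_{ij}` into `A * Jᵀ = 1`, hence also
`Jᵀ * A = 1`. Three facts follow. First, `∂/∂X_k = ∑ j, J j k • δ'_j`, so a polynomial killed by
every `δ'_j` has vanishing partial derivatives and is constant in characteristic zero: this is (1).
Second, a derivation that kills every `σ(X_j)` is zero. Third, applying this to commutators, the
`δ'_i` commute pairwise.

For (2), put `y_j = σ(X_j)`. Multiplication by `y_j` preserves local nilpotency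
(`pow_succ_mul_eq_zero`), so `σ(P_m)` lies in every `N(δ'_i)`. Conversely, let `f` be nilpotent
for all `δ'_i`; `mem_range_of_nilpotent` works by induction on a set `S` outside of which the `δ'_i`
kill `f`, and, for a new index `s`, on `k` with `δ'_s^k f = 0`. If `δ'_s^(k+1) f = 0`, then
`g = δ'_s^k f` is killed by `δ'_s`, so `g` is in the image by the hypothesis on `S`, and
`f - y_s^k g / k!` is killed by `δ'_s^k`.
-/

namespace JacobianEndo

variable {K : Type*} [Field K] {m : ℕ}

local notation "P" => MvPolynomial (Fin m) K

theorem eq_C_of_pderiv_eq_zero [CharZero K] (f : P) (h : ∀ k, pderiv k f = 0) :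
    ∃ c : K, f = C c := by
  refine ⟨coeff 0 f, ?_⟩
  ext s
  rw [coeff_C]
  split_ifs with hs
  · rw [hs]
  · obtain ⟨i, hi⟩ : ∃ i, s i ≠ 0 := by
      by_contra! hcon
      exact hs (Finsupp.ext fun i => (hcon i).symm)
    have h1 := congrArg (coeff (s - Finsupp.single i 1)) (h i)
    have h2 : s - Finsupp.single i 1 + Finsupp.single i 1 = s :=
      tsub_add_cancel_of_le (by simpa [Nat.one_le_iff_ne_zero] using hi)
    rw [coeff_pderiv, h2, coeff_zero] at h1
    rcases mul_eq_zero.mp h1 with h3 | h3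
    · exact h3
    · exact absurd h3 (Nat.cast_add_one_ne_zero _)

theorem sum_smul_apply (a : Fin m → P) (D : Fin m → Derivation K P P) (f : P) :
    (∑ k, a k • D k) f = ∑ k, a k * D k f := by
  have h := congrFun (map_sum (Derivation.coeFnAddMonoidHom (R := K) (A := P) (M := P))
    (fun k => a k • D k) Finset.univ) f
  rw [Finset.sum_apply] at h
  exact h

/-- The chain rule, for an arbitrary derivation in place of a vector field. -/
theorem derivation_apply (D : Derivation K P P) (f : P) :
    D f = ∑ k, D (X k) * pderiv k f := by
  have h : D = ∑ k, D (X k) • pderiv (R := K) k := by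
    refine MvPolynomial.derivation_ext fun i => ?_
    simp [sum_smul_apply, pderiv_X, Pi.single_apply]
  conv_lhs => rw [h, sum_smul_apply]

/-- The matrices `(δ_j(X_l))` and `(∂y_j/∂X_k)ᵀ` are mutually inverse; this is the product in
the order that does not come directly from the chain rule. -/
theorem jacobian_mul {y : Fin m → P} {δ : Fin m → Derivation K P P}
    (hδ : ∀ i j, δ i (y j) = if i = j then 1 else 0) (k l : Fin m) :
    ∑ j, pderiv k (y j) * δ j (X l) = if k = l then 1 else 0 := by
  have h : (Matrix.of fun i k => δ i (X k)) * (Matrix.of fun k j => pderiv k (y j)) = 1 := by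
    ext1 i j
    rw [Matrix.mul_apply, Matrix.one_apply, ← hδ i j, derivation_apply]
    rfl
  have hJA := congrArg (fun M => M k l) (mul_eq_one_comm.mp h)
  rw [Matrix.mul_apply, Matrix.one_apply] at hJA
  exact hJA

theorem pderiv_eq {y : Fin m → P} {δ : Fin m → Derivation K P P}
    (hδ : ∀ i j, δ i (y j) = if i = j then 1 else 0) (k : Fin m) (f : P) :
    pderiv k f = ∑ j, pderiv k (y j) * δ j f := by
  have h : pderiv (R := K) k = ∑ j, pderiv k (y j) • δ j := by
    refine MvPolynomial.derivation_ext fun l => ?_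
    rw [sum_smul_apply, jacobian_mul hδ, pderiv_X, Pi.single_apply]
    simp [eq_comm]
  conv_lhs => rw [h, sum_smul_apply]

theorem derivation_eq_zero {y : Fin m → P} {δ : Fin m → Derivation K P P}
    (hδ : ∀ i j, δ i (y j) = if i = j then 1 else 0) (D : Derivation K P P)
    (hD : ∀ j, D (y j) = 0) : D = 0 := by
  refine MvPolynomial.derivation_ext fun l => ?_
  -- `D(X_l) = ∑ k, D(X_k) * (Jᵀ A) k l = ∑ j, D(y_j) * A j l`
  calc D (X l) = ∑ k, D (X k) * ∑ j, pderiv k (y j) * δ j (X l) := by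
        simp [jacobian_mul hδ]
    _ = ∑ j, D (y j) * δ j (X l) := by
        simp_rw [derivation_apply D (y _), Finset.mul_sum, Finset.sum_mul]
        rw [Finset.sum_comm]
        simp_rw [mul_assoc]
    _ = (0 : Derivation K P P) (X l) := by simp [hD]

theorem commute {y : Fin m → P} {δ : Fin m → Derivation K P P}
    (hδ : ∀ i j, δ i (y j) = if i = j then 1 else 0) (i j : Fin m) :
    Commute (δ i).toLinearMap (δ j).toLinearMap := by
  have h : ⁅δ i, δ j⁆ = 0 := by
    refine derivation_eq_zero hδ _ fun l => ?_
    rw [Derivation.commutator_apply, hδ, hδ]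
    split_ifs <;> simp
  refine LinearMap.ext fun f => ?_
  have := DFunLike.congr_fun h f
  rw [Derivation.commutator_apply] at this
  exact sub_eq_zero.mp this

theorem pow_mul_of_apply_eq_zero (D : Derivation K P P) {a : P} (ha : D a = 0) (n : ℕ) (g : P) :
    (D.toLinearMap ^ n) (a * g) = a * (D.toLinearMap ^ n) g := by
  induction n generalizing g with
  | zero => simp
  | succ n ih =>
    rw [pow_succ, Module.End.mul_apply, Module.End.mul_apply]
    have : D.toLinearMap (a * g) = a * D.toLinearMap g := by
      simp [ha]
    rw [this, ih]

/-- If `a` is a slice of `D` (that is, `D a = 1`) and `D g = 0`, then `D^n (a^n g) = n! g`. -/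
theorem pow_slice_pow_mul (D : Derivation K P P) {a g : P} (ha : D a = 1) (hg : D g = 0) (n : ℕ) :
    (D.toLinearMap ^ n) (a ^ n * g) = (n.factorial : K) • g := by
  induction n with
  | zero => simp
  | succ n ih =>
    rw [pow_succ, Module.End.mul_apply]
    have : D.toLinearMap (a ^ (n + 1) * g) = ((n + 1 : ℕ) : K) • (a ^ n * g) := by
      simp only [Derivation.coeFn_coe, Derivation.leibniz, hg, Derivation.leibniz_pow, ha,
        smul_eq_mul, Nat.add_sub_cancel, smul_eq_C_mul, nsmul_eq_mul, map_natCast]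
      ring
    rw [this, map_smul, ih, smul_smul, Nat.factorial_succ, Nat.cast_mul]

theorem pow_succ_mul_eq_zero {y : Fin m → P} {δ : Fin m → Derivation K P P}
    (hδ : ∀ i j, δ i (y j) = if i = j then 1 else 0) (i j : Fin m) (n : ℕ) (f : P)
    (hf : ((δ i).toLinearMap ^ n) f = 0) :
    ((δ i).toLinearMap ^ (n + 1)) (f * y j) = 0 := by
  induction n generalizing f with
  | zero =>
    have : f = 0 := by simpa using hf
    simp [this]
  | succ n ih =>
    rw [pow_succ, Module.End.mul_apply]
    have h1 : (δ i).toLinearMap (f * y j) = (if i = j then f else 0) + δ i f * y j := by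
      simp only [Derivation.coeFn_coe, Derivation.leibniz, hδ, smul_eq_mul]
      split_ifs <;> ring
    rw [h1, map_add, ih (δ i f) (by rw [pow_succ] at hf; exact hf)]
    split_ifs <;> simp [hf]

theorem nilpotent_of_range (σ : P →ₐ[K] P) (δ : Fin m → Derivation K P P)
    (hδ : ∀ i j, δ i (σ (X j)) = if i = j then 1 else 0) (i : Fin m) (p : P) :
    ∃ k : ℕ, ((δ i).toLinearMap ^ k) (σ p) = 0 := by
  induction p using MvPolynomial.induction_on with
  | C a =>
    refine ⟨1, ?_⟩
    have : σ (C a) = C a := σ.commutes a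
    rw [this, pow_one]
    exact derivation_C _ _
  | add p q hp hq =>
    obtain ⟨k, hk⟩ := hp
    obtain ⟨l, hl⟩ := hq
    refine ⟨k + l, ?_⟩
    rw [map_add, map_add, pow_add, Module.End.mul_apply, Module.End.mul_apply, hl, map_zero,
      add_zero, ← Module.End.mul_apply, ← pow_add, add_comm, pow_add, Module.End.mul_apply, hk,
      map_zero]
  | mul_X p j hp =>
    obtain ⟨k, hk⟩ := hp
    refine ⟨k + 1, ?_⟩
    rw [map_mul]
    exact pow_succ_mul_eq_zero (y := fun j => σ (X j)) hδ i j k _ hk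

theorem mem_range_of_nilpotent [CharZero K] (σ : P →ₐ[K] P) (δ : Fin m → Derivation K P P)
    (hδ : ∀ i j, δ i (σ (X j)) = if i = j then 1 else 0) (S : Finset (Fin m)) :
    ∀ f : P, (∀ i, ∃ k : ℕ, ((δ i).toLinearMap ^ k) f = 0) → (∀ i ∉ S, δ i f = 0) →
      f ∈ σ.range := by
  induction S using Finset.induction_on with
  | empty =>
    intro f _ hf
    obtain ⟨c, rfl⟩ := eq_C_of_pderiv_eq_zero f fun k => by
      rw [pderiv_eq (y := fun j => σ (X j)) hδ]
      simp [hf]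
    exact σ.range.algebraMap_mem c
  | insert s S _ ihS =>
    intro f hN hf
    obtain ⟨k, hk⟩ := hN s
    induction k generalizing f with
    | zero =>
      have : f = 0 := by simpa using hk
      rw [this]
      exact zero_mem _
    | succ k ihk =>
      set g := ((δ s).toLinearMap ^ k) f with hg
      have hsg : δ s g = 0 := by
        rw [pow_succ', Module.End.mul_apply] at hk
        exact hk
      have hcomm (i : Fin m) (n : ℕ) :
          ((δ i).toLinearMap ^ n) g = ((δ s).toLinearMap ^ k) (((δ i).toLinearMap ^ n) f) := by
        have := (commute (y := fun j => σ (X j)) hδ i s).pow_pow n k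
        exact LinearMap.congr_fun this f
      have hig (i : Fin m) (hi : i ∉ insert s S) : δ i g = 0 := by
        have := hcomm i 1
        simpa [hf i hi] using this
      have hgr : g ∈ σ.range := by
        refine ihS g (fun i => ?_) fun i hi => ?_
        · obtain ⟨n, hn⟩ := hN i
          exact ⟨n, by rw [hcomm, hn, map_zero]⟩
        · by_cases his : i = s
          · rw [his, hsg]
          · exact hig i (by simp [his, hi])
      have hy (i : Fin m) (his : i ≠ s) : δ i (σ (X s) ^ k) = 0 := by
        simp [Derivation.leibniz_pow, hδ, his]
      set u : P := (k.factorial : K)⁻¹ • (σ (X s) ^ k * g) with hu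
      have hur : u ∈ σ.range :=
        σ.range.smul_mem (mul_mem (pow_mem (AlgHom.mem_range_self σ (X s)) k) hgr) _
      have hkfu : ((δ s).toLinearMap ^ k) (f - u) = 0 := by
        have hfac : (k.factorial : K) ≠ 0 := Nat.cast_ne_zero.mpr k.factorial_ne_zero
        rw [map_sub, hu, map_smul, pow_slice_pow_mul (δ s) (by simp [hδ]) hsg, smul_smul,
          inv_mul_cancel₀ hfac, one_smul, ← hg, sub_self]
      have hfu : f - u ∈ σ.range := by
        refine ihk (f - u) (fun i => ?_) (fun i hi => ?_) hkfu
        · by_cases his : i = s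
          · exact ⟨k, by rw [his, hkfu]⟩
          · obtain ⟨n, hn⟩ := hN i
            refine ⟨n, ?_⟩
            rw [map_sub, hn, hu, map_smul, pow_mul_of_apply_eq_zero (δ i) (hy i his), hcomm, hn]
            simp
        · have his : i ≠ s := fun h => hi (by simp [h])
          have := pow_mul_of_apply_eq_zero (δ i) (hy i his) 1 g
          rw [pow_one, Derivation.coeFn_coe, hig i hi, mul_zero] at this
          rw [map_sub, hf i hi, hu, Derivation.map_smul, this, smul_zero, sub_zero]
      simpa using add_mem hfu hur

end JacobianEndo

/-- **Corollary.** Let `σ` be a `K`-algebra endomorphism of `P_m = K[X_1, …, X_m]`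
(char `K = 0`) with Jacobian determinant a nonzero scalar and `σ(X_i)` of zero
constant term (i.e. `σ(X_i) ∈ (X_1, …, X_m)`), and let `δ_1', …, δ_m'` be the
(unique) `K`-derivations with `δ_i'(σ(X_j)) = δ_{ij}`. Then
(1) `∩ ker δ_i' = K`; and (2) `∩ N(δ_i', P_m) = σ(P_m)`. -/
theorem kernels_and_nil_spaces_of_jacobian_endomorphism
    {K : Type*} [Field K] [CharZero K] (m : ℕ)
    (σ : MvPolynomial (Fin m) K →ₐ[K] MvPolynomial (Fin m) K)
    (hJ : ∃ c : K, c ≠ 0 ∧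
      (Matrix.of fun i j : Fin m => pderiv j (σ (X i))).det = C c)
    (hm : ∀ i, constantCoeff (σ (X i)) = 0)
    (δ' : Fin m → Derivation K (MvPolynomial (Fin m) K) (MvPolynomial (Fin m) K))
    (hδ' : ∀ i j, δ' i (σ (X j)) = if i = j then 1 else 0) :
    -- (1) the joint kernel of the `δ_i'` consists of the constants
    (∀ f : MvPolynomial (Fin m) K, (∀ i, δ' i f = 0) ↔ ∃ c : K, f = C c) ∧
    -- (2) the joint locally nilpotent part is the image of `σ`
    (∀ f : MvPolynomial (Fin m) K,
      (∀ i, ∃ k : ℕ, ((δ' i).toLinearMap ^ k) f = 0) ↔ f ∈ Set.range σ) := by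
  refine ⟨fun f => ⟨fun h => ?_, ?_⟩, fun f => ⟨fun h => ?_, ?_⟩⟩
  · refine JacobianEndo.eq_C_of_pderiv_eq_zero f fun k => ?_
    rw [JacobianEndo.pderiv_eq (y := fun j => σ (X j)) hδ']
    simp [h]
  · rintro ⟨c, rfl⟩ i
    exact derivation_C _ _
  · exact JacobianEndo.mem_range_of_nilpotent σ δ' hδ' Finset.univ f h (by simp)
  · rintro ⟨p, rfl⟩ i
    exact JacobianEndo.nilpotent_of_range σ δ' hδ' i p
end

section
/- Let K be a field of characteristic zero, s ≥ 1, and let A be a commutative associative unital K-algebra. Then the following are equivalent: (i) there exist s nonzero pairwise commuting locally nilpotent K-derivations δ_1, …, δ_s of A with generic kernels such that ∩_{i=1}^s ker δ_i = K·1; (ii) A is isomorphic as a K-algebra to the polynomial ring K[X_1, …, X_s] in s variables. -/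
/-- Derivations have *generic kernels* if distinct subsets `I ⊆ {1,…,s}` give
distinct intersections `∩_{i ∈ I} ker δ_i`. -/
def GenericKernels {K A : Type*} [CommRing K] [Ring A] [Algebra K A]
    {s : ℕ} (δ : Fin s → (A →ₗ[K] A)) : Prop :=
  ∀ I J : Set (Fin s),
    (⨅ i ∈ I, LinearMap.ker (δ i)) = (⨅ i ∈ J, LinearMap.ker (δ i)) → I = J

open MvPolynomial

/-- Formal antiderivative in the variable `X i`, with no constant of integration: it sends the
monomial `X ^ m` to `(m i + 1)⁻¹ X i * X ^ m`. -/
noncomputable def antideriv {σ K : Type*} [Field K] (i : σ) :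
    MvPolynomial σ K →ₗ[K] MvPolynomial σ K :=
  (basisMonomials σ K).constr K
    fun m => monomial (m + Finsupp.single i 1) ((m i : K) + 1)⁻¹

lemma antideriv_monomial {σ K : Type*} [Field K] (i : σ) (m : σ →₀ ℕ) (c : K) :
    antideriv i (monomial m c) =
      monomial (m + Finsupp.single i 1) (c * ((m i : K) + 1)⁻¹) := by
  have h : (monomial m c : MvPolynomial σ K) = c • basisMonomials σ K m := by
    simp [smul_monomial]
  rw [h, map_smul, antideriv, Module.Basis.constr_basis, smul_monomial, smul_eq_mul]

lemma pderiv_antideriv {σ K : Type*} [Field K] [CharZero K] (i : σ) (p : MvPolynomial σ K) :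
    pderiv i (antideriv i p) = p := by
  induction p using MvPolynomial.induction_on' with
  | add p q hp hq => simp [hp, hq]
  | monomial m c =>
    have h : (m i : K) + 1 ≠ 0 := Nat.cast_add_one_ne_zero _
    rw [antideriv_monomial, pderiv_monomial]
    simp [h]

lemma pderiv_antideriv_of_ne {σ K : Type*} [Field K] {i j : σ} (hij : j ≠ i)
    (p : MvPolynomial σ K) :
    pderiv j (antideriv i p) = antideriv i (pderiv j p) := by
  classical
  induction p using MvPolynomial.induction_on' with
  | add p q hp hq => simp [hp, hq]
  | monomial m c =>
    rw [antideriv_monomial, pderiv_monomial, pderiv_monomial, antideriv_monomial]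
    by_cases h : m j = 0
    · simp [h, hij]
    · have hm : m + Finsupp.single i 1 - Finsupp.single j 1 =
          m - Finsupp.single j 1 + Finsupp.single i 1 := by
        ext k
        by_cases hk : k = j
        · subst hk
          simp [hij.symm]
        · simp [Finsupp.single_apply, Ne.symm hk]
      rw [hm]
      congr 1
      simp [hij, hij.symm]
      ring

/-- In characteristic zero a polynomial with vanishing gradient is constant. -/
lemma eq_C_of_pderiv_eq_zero {σ K : Type*} [Field K] [CharZero K] {p : MvPolynomial σ K}
    (h : ∀ i, pderiv i p = 0) : p = C (coeff 0 p) := by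
  classical
  ext m
  rw [coeff_C]
  split_ifs with hm
  · rw [hm]
  · obtain ⟨i, hi⟩ : ∃ i, m i ≠ 0 := by
      by_contra! hc
      exact hm (Finsupp.ext fun i => (hc i).symm)
    have h1 := coeff_pderiv (i := i) p (m - Finsupp.single i 1)
    rw [h i, coeff_zero, Finsupp.sub_add_single_one_cancel hi] at h1
    exact (mul_eq_zero.mp h1.symm).resolve_right (Nat.cast_add_one_ne_zero _)

lemma pderiv_locally_nilpotent {σ K : Type*} [Field K] (i : σ) (p : MvPolynomial σ K) :
    ∃ k : ℕ, (((pderiv i : Derivation K _ _) : MvPolynomial σ K →ₗ[K] MvPolynomial σ K) ^ k) p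
      = 0 := by
  have key : ∀ (n : ℕ) (p : MvPolynomial σ K), (∀ m, coeff m p ≠ 0 → m i < n) →
      (((pderiv i : Derivation K _ _) : MvPolynomial σ K →ₗ[K] MvPolynomial σ K) ^ n) p = 0 := by
    intro n
    induction n with
    | zero =>
      intro p hp
      ext m
      by_contra hm
      exact absurd (hp m (by simpa using hm)) (by simp)
    | succ n ih =>
      intro p hp
      rw [pow_succ, Module.End.mul_apply]
      refine ih _ fun m hm => ?_
      have h2 := hp (m + Finsupp.single i 1) fun h0 => hm (by
        simp [coeff_pderiv, h0])
      simpa using h2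
  exact ⟨degreeOf i p + 1, key _ p fun m hm =>
    Nat.lt_succ_of_le (monomial_le_degreeOf i (mem_support_iff.mpr hm))⟩

lemma IsDerivation.map_one {K A : Type*} [Field K] [CommRing A] [Algebra K A]
    {δ : A →ₗ[K] A} (h : IsDerivation δ) : δ 1 = 0 := by
  simpa using h 1 1

lemma IsDerivation.map_algebraMap {K A : Type*} [Field K] [CommRing A] [Algebra K A]
    {δ : A →ₗ[K] A} (h : IsDerivation δ) (c : K) : δ (algebraMap K A c) = 0 := by
  rw [Algebra.algebraMap_eq_smul_one, map_smul, h.map_one, smul_zero]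

/-- An element moved by `δ i` alone can be replaced by one on which `δ i` takes the value `1`. -/
lemma exists_coordinate {K A σ : Type*} [Field K] [CommRing A] [Algebra K A]
    {δ : σ → (A →ₗ[K] A)} (hcomm : ∀ i j a, δ i (δ j a) = δ j (δ i a))
    (hker : ∀ a, (∀ i, δ i a = 0) → ∃ c : K, algebraMap K A c = a) (i : σ) :
    ∀ (k : ℕ) (a : A), (∀ j, j ≠ i → δ j a = 0) → δ i a ≠ 0 → (δ i ^ k) a = 0 →
      ∃ y, (∀ j, j ≠ i → δ j y = 0) ∧ δ i y = 1 := by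
  intro k
  induction k with
  | zero =>
    intro a _ hne h
    exact absurd (by rw [show a = 0 by simpa using h, map_zero]) hne
  | succ k ih =>
    intro a ha hne h
    rw [pow_succ, Module.End.mul_apply] at h
    have ha' : ∀ j, j ≠ i → δ j (δ i a) = 0 := fun j hj => by rw [hcomm, ha j hj, map_zero]
    by_cases h2 : δ i (δ i a) = 0
    · obtain ⟨c, hc⟩ := hker (δ i a) fun j => by
        by_cases hj : j = i
        · rw [hj, h2]
        · exact ha' j hj
      have hc0 : c ≠ 0 := by
        rintro rfl
        exact hne (by rw [← hc, map_zero])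
      refine ⟨c⁻¹ • a, fun j hj => by rw [map_smul, ha j hj, smul_zero], ?_⟩
      rw [map_smul, ← hc, Algebra.algebraMap_eq_smul_one, smul_smul, inv_mul_cancel₀ hc0, one_smul]
    · exact ih _ ha' h2 h

section Coordinates

variable {K A σ : Type*} [Field K] [CommRing A] [Algebra K A] [DecidableEq σ]
  {δ : σ → (A →ₗ[K] A)} {x : σ → A}

/-- The evaluation at a system of coordinates intertwines `∂ i` with `δ i`. -/
lemma map_aeval_of_coordinates (hder : ∀ i, IsDerivation (δ i))
    (hx : ∀ i j, δ i (x j) = if i = j then 1 else 0) (i : σ) (p : MvPolynomial σ K) :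
    δ i (aeval x p) = aeval x (pderiv i p) := by
  induction p using MvPolynomial.induction_on with
  | C c => simp [(hder i).map_algebraMap]
  | add p q hp hq => simp [hp, hq]
  | mul_X p j hp =>
    rw [map_mul, hder i, hp, pderiv_mul, aeval_X, hx, pderiv_X]
    by_cases h : i = j
    · subst h; simp
    · simp [h]

lemma aeval_injective_of_coordinates [CharZero K] [Nontrivial A] (hder : ∀ i, IsDerivation (δ i))
    (hx : ∀ i j, δ i (x j) = if i = j then 1 else 0) :
    Function.Injective (aeval x : MvPolynomial σ K →ₐ[K] A) := by
  have key : ∀ (n : ℕ) (p : MvPolynomial σ K), (∀ m, coeff m p ≠ 0 → m.degree < n) →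
      aeval x p = 0 → p = 0 := by
    intro n
    induction n with
    | zero =>
      intro p hp _
      ext m
      by_contra hm
      exact absurd (hp m (by simpa using hm)) (by simp)
    | succ n ih =>
      intro p hp h0
      have hgrad : ∀ i, pderiv i p = 0 := fun i => by
        refine ih _ (fun m hm => ?_) ?_
        · have h2 := hp (m + Finsupp.single i 1) fun h0 => hm (by simp [coeff_pderiv, h0])
          simpa using h2
        · rw [← map_aeval_of_coordinates hder hx, h0, map_zero]
      have hC := eq_C_of_pderiv_eq_zero hgrad
      rw [hC, aeval_C, map_eq_zero_iff _ (algebraMap K A).injective] at h0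
      rw [hC, h0, C_0]
  rw [injective_iff_map_eq_zero]
  intro p hp
  refine key (totalDegree p + 1) p (fun m hm => Nat.lt_succ_of_le ?_) hp
  exact le_totalDegree (mem_support_iff.mpr hm)

/-- An element killed by all `δ j` with `j ∉ S` is a polynomial in the coordinates. -/
lemma mem_range_of_coordinates [CharZero K] [Nontrivial A] (hder : ∀ i, IsDerivation (δ i))
    (hcomm : ∀ i j a, δ i (δ j a) = δ j (δ i a))
    (hnil : ∀ i (a : A), ∃ k : ℕ, (δ i ^ k) a = 0)
    (hker : ∀ a, (∀ i, δ i a = 0) → ∃ c : K, algebraMap K A c = a)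
    (hx : ∀ i j, δ i (x j) = if i = j then 1 else 0) (S : Finset σ) :
    ∀ a, (∀ j ∉ S, δ j a = 0) → ∃ p : MvPolynomial σ K, aeval x p = a := by
  induction S using Finset.induction_on with
  | empty =>
    intro a ha
    obtain ⟨c, hc⟩ := hker a fun i => ha i (by simp)
    exact ⟨C c, by simp [hc]⟩
  | insert i S hi ih =>
    have key : ∀ (k : ℕ) (a : A), (∀ j ∉ insert i S, δ j a = 0) → (δ i ^ k) a = 0 →
        ∃ p : MvPolynomial σ K, aeval x p = a := by
      intro k
      induction k with
      | zero => exact fun a _ h => ⟨0, by simpa using h.symm⟩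
      | succ k ihk =>
        intro a ha hk
        rw [pow_succ, Module.End.mul_apply] at hk
        obtain ⟨p, hp⟩ := ihk (δ i a) (fun j hj => by rw [hcomm, ha j hj, map_zero]) hk
        obtain ⟨r, hr⟩ := ih (a - aeval x (antideriv i p)) fun j hj => by
          rw [map_sub, map_aeval_of_coordinates hder hx]
          by_cases hji : j = i
          · rw [hji, pderiv_antideriv, hp, sub_self]
          · have hj' : j ∉ insert i S := by simp [hji, hj]
            -- `∂ j p` vanishes because `φ (∂ j p) = δ j (δ i a) = δ i (δ j a) = 0`.
            have hpj : pderiv j p = 0 := by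
              apply aeval_injective_of_coordinates hder hx
              rw [← map_aeval_of_coordinates hder hx, hp, hcomm, ha j hj', map_zero, map_zero]
            rw [pderiv_antideriv_of_ne hji, hpj, ha j hj', map_zero, map_zero, sub_zero]
        exact ⟨r + antideriv i p, by rw [map_add, hr, sub_add_cancel]⟩
    intro a ha
    obtain ⟨k, hk⟩ := hnil i a
    exact key k a ha hk

end Coordinates

/-- **Corollary (characterization of polynomial algebras).** A commutative
`K`-algebra `A` (char `K = 0`, `s ≥ 1`) admits `s` nonzero commuting locally
nilpotent `K`-derivations with generic kernels and joint kernel `K·1` if and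
only if `A` is isomorphic to the polynomial algebra `K[X_1, …, X_s]`. -/
theorem polynomial_algebra_characterization
    {K A : Type*} [Field K] [CharZero K] [CommRing A] [Algebra K A]
    (s : ℕ) (hs : 1 ≤ s) :
    (∃ δ : Fin s → (A →ₗ[K] A),
      (∀ i, IsDerivation (δ i)) ∧
      (∀ i, δ i ≠ 0) ∧
      (∀ i j, (δ i).comp (δ j) = (δ j).comp (δ i)) ∧
      (∀ i (a : A), ∃ k : ℕ, (δ i ^ k) a = 0) ∧
      GenericKernels δ ∧
      (⨅ i, LinearMap.ker (δ i)) = Submodule.span K {(1 : A)}) ↔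
    Nonempty (A ≃ₐ[K] MvPolynomial (Fin s) K) := by
  constructor
  · rintro ⟨δ, hder, hne, hcomm', hnil, hgen, hker'⟩
    have hcomm : ∀ i j a, δ i (δ j a) = δ j (δ i a) := fun i j a =>
      LinearMap.congr_fun (hcomm' i j) a
    have hker : ∀ a, (∀ i, δ i a = 0) → ∃ c : K, algebraMap K A c = a := by
      intro a ha
      have h1 : a ∈ ⨅ i, LinearMap.ker (δ i) := by simpa [Submodule.mem_iInf] using ha
      rw [hker', Submodule.mem_span_singleton] at h1
      obtain ⟨c, hc⟩ := h1
      exact ⟨c, by rw [Algebra.algebraMap_eq_smul_one, hc]⟩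
    have : Nontrivial A := by
      by_contra hA
      rw [not_nontrivial_iff_subsingleton] at hA
      exact hne ⟨0, hs⟩ (LinearMap.ext fun a => Subsingleton.elim _ _)
    have hcoord : ∀ i, ∃ y, (∀ j, j ≠ i → δ j y = 0) ∧ δ i y = 1 := by
      intro i
      obtain ⟨a, ha, hai⟩ : ∃ a, (∀ j, j ≠ i → δ j a = 0) ∧ δ i a ≠ 0 := by
        by_contra! hc
        have heq := hgen {j | j ≠ i} Set.univ (by
          ext a
          simp only [Submodule.mem_iInf, Set.mem_ofPred_eq, LinearMap.mem_ker, Set.mem_univ,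
            forall_true_left]
          refine ⟨fun h j => ?_, fun h j _ => h j⟩
          by_cases hj : j = i
          · rw [hj, hc a h]
          · exact h j hj)
        have hi : i ∈ {j | j ≠ i} := heq ▸ Set.mem_univ i
        exact hi rfl
      obtain ⟨k, hk⟩ := hnil i a
      exact exists_coordinate hcomm hker i k a ha hai hk
    choose x hx0 hx1 using hcoord
    have hx : ∀ i j, δ i (x j) = if i = j then 1 else 0 := by
      intro i j
      split_ifs with h
      · rw [h, hx1]
      · exact hx0 j i h
    exact ⟨(AlgEquiv.ofBijective (aeval x) ⟨aeval_injective_of_coordinates hder hx, fun a =>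
      mem_range_of_coordinates hder hcomm hnil hker hx Finset.univ a (by simp)⟩).symm⟩
  · rintro ⟨e⟩
    let D : Fin s → Module.End K (MvPolynomial (Fin s) K) := fun i =>
      ((pderiv i : Derivation K _ _) : MvPolynomial (Fin s) K →ₗ[K] MvPolynomial (Fin s) K)
    let δ : Fin s → (A →ₗ[K] A) := fun i => e.symm.toLinearEquiv.conjAlgEquiv K (D i)
    have hδ : ∀ i a, δ i a = e.symm (pderiv i (e a)) := fun i a => rfl
    have hδ0 : ∀ i a, δ i a = 0 ↔ pderiv i (e a) = 0 := fun i a => by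
      rw [hδ, map_eq_zero_iff _ e.symm.injective]
    have hX : ∀ i j, δ i (e.symm (X j)) = 0 ↔ i ≠ j := fun i j => by
      rw [hδ0, e.apply_symm_apply, pderiv_X]
      by_cases h : j = i
      · subst h; simp
      · simp [h, Ne.symm h]
    refine ⟨δ, fun i a b => ?_, fun i h => ?_, fun i j => ?_, fun i a => ?_, fun I J h => ?_, ?_⟩
    · simp only [hδ, map_mul, pderiv_mul, map_add, e.symm_apply_apply]
    · exact (hX i i).mp (by rw [h, LinearMap.zero_apply]) rfl
    · ext a
      simp only [LinearMap.comp_apply, hδ, e.apply_symm_apply]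
      congr 1
      ext m
      simp only [coeff_pderiv]
      by_cases hij : i = j
      · rw [hij]
      · rw [add_right_comm]
        simp [hij, Ne.symm hij]
        ring
    · obtain ⟨k, hk⟩ := pderiv_locally_nilpotent i (e a)
      refine ⟨k, ?_⟩
      have h1 : δ i ^ k = e.symm.toLinearEquiv.conjAlgEquiv K (D i ^ k) := (map_pow _ _ _).symm
      rw [h1]
      change e.symm ((D i ^ k) (e a)) = 0
      rw [hk, map_zero]
    · -- `X j` lies in the joint kernel over `I` exactly when `j ∉ I`.
      have hmem : ∀ (I : Set (Fin s)) (j : Fin s),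
          e.symm (X j) ∈ (⨅ i ∈ I, LinearMap.ker (δ i)) ↔ j ∉ I := by
        intro I j
        simp only [Submodule.mem_iInf, LinearMap.mem_ker, hX]
        exact ⟨fun h hj => h j hj rfl, fun h i hi hij => h (hij ▸ hi)⟩
      ext j
      rw [← not_iff_not, ← hmem I j, h, hmem J j]
    · ext a
      simp only [Submodule.mem_iInf, LinearMap.mem_ker, hδ0, Submodule.mem_span_singleton]
      constructor
      · intro h
        refine ⟨coeff 0 (e a), e.injective ?_⟩
        rw [← Algebra.algebraMap_eq_smul_one, e.commutes, algebraMap_eq]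
        exact (eq_C_of_pderiv_eq_zero h).symm
      · rintro ⟨c, rfl⟩ i
        rw [← Algebra.algebraMap_eq_smul_one, e.commutes, algebraMap_eq, pderiv_C]
end

section
/- Let A be an associative unital algebra over a field K of characteristic zero and let δ_1, …, δ_s be pairwise commuting locally nilpotent K-derivations of A with generic kernels such that Γ := ∩_{i=1}^s ker δ_i is a division ring and Γ ≠ A. Then there exist nonzero elements x_1, …, x_s ∈ A with x_i ∈ ∩_{j≠i} ker δ_j for each i and δ_i(x_j) = δ_{ij}·1 for all i, j. -/
theorem exists_last_ne_zero_iterate {K A : Type*} [CommRing K] [AddCommGroup A] [Module K A]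
    (d : A →ₗ[K] A) (y : A) (hy : d y ≠ 0) (hnil : ∃ k : ℕ, (d ^ k) y = 0) :
    ∃ n : ℕ, d ((d ^ n) y) ≠ 0 ∧ d (d ((d ^ n) y)) = 0 := by
  by_contra! hcon
  have hne : ∀ n : ℕ, d ((d ^ n) y) ≠ 0 := by
    intro n
    induction n with
    | zero => simpa using hy
    | succ n ih =>
      rw [pow_succ', Module.End.mul_apply]
      exact hcon n ih
  obtain ⟨k, hk⟩ := hnil
  exact hne k (by rw [hk, map_zero])

/-- **Lemma.** Let `δ_1, …, δ_s` be commuting locally nilpotent `K`-derivations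
of `A` (char `K = 0`) with generic kernels, such that `Γ := ∩ ker δ_i` is a
division ring and `Γ ≠ A`. Then there are nonzero `x_1, …, x_s ∈ A` with
`x_i ∈ ∩_{j ≠ i} ker δ_j` and `δ_i(x_j) = δ_{ij}`. -/
theorem exists_slices_of_commuting_ln_derivations
    {K A : Type*} [Field K] [CharZero K] [Ring A] [Algebra K A]
    {s : ℕ} (δ : Fin s → (A →ₗ[K] A))
    (hder : ∀ i, IsDerivation (δ i))
    (hcomm : ∀ i j, (δ i).comp (δ j) = (δ j).comp (δ i))
    (hln : ∀ i (a : A), ∃ k : ℕ, (δ i ^ k) a = 0)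
    (hgen : GenericKernels δ)
    -- `Γ = ∩ ker δ_i` is a division ring:
    (hdiv : ∀ a : A, (∀ i, δ i a = 0) → a ≠ 0 →
      ∃ b : A, (∀ i, δ i b = 0) ∧ a * b = 1 ∧ b * a = 1)
    -- and `Γ ≠ A`:
    (hne : ∃ a : A, ¬ (∀ i, δ i a = 0)) :
    ∃ x : Fin s → A,
      (∀ i, x i ≠ 0) ∧
      (∀ i j, δ i (x j) = if i = j then (1 : A) else 0) := by
  -- It suffices to build each `x i` separately.
  suffices h : ∀ i, ∃ x : A, δ i x = 1 ∧ ∀ j, j ≠ i → δ j x = 0 by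
    choose x hx1 hx0 using h
    have hδ : ∀ i j, δ i (x j) = if i = j then (1 : A) else 0 := by
      intro i j
      split_ifs with hij
      · subst hij
        exact hx1 i
      · exact hx0 j i hij
    obtain ⟨a, ha⟩ := hne
    have : Nontrivial A := by
      by_contra hA
      rw [not_nontrivial_iff_subsingleton] at hA
      exact ha fun i => Subsingleton.elim _ _
    refine ⟨x, fun i hi => ?_, hδ⟩
    have h1 := hx1 i
    rw [hi, map_zero] at h1
    exact zero_ne_one h1
  intro i
  -- Genericity for `{j | j ≠ i}` and the full index set separates `δ i` from the others.
  obtain ⟨y, hy0, hyi⟩ : ∃ y : A, (∀ j, j ≠ i → δ j y = 0) ∧ δ i y ≠ 0 := by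
    by_contra! hcon
    have hI : ({j | j ≠ i} : Set (Fin s)) = Set.univ := by
      apply hgen
      ext y
      simp only [Submodule.mem_iInf, LinearMap.mem_ker, Set.mem_setOf_eq, Set.mem_univ,
        forall_true_left]
      refine ⟨fun hy j => ?_, fun hy j _ => hy j⟩
      by_cases hj : j = i
      · rw [hj]
        exact hcon y hy
      · exact hy j hj
    have hi : i ∈ ({j | j ≠ i} : Set (Fin s)) := hI ▸ Set.mem_univ i
    exact hi rfl
  obtain ⟨n, hn1, hn2⟩ := exists_last_ne_zero_iterate (δ i) y hyi (hln i y)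
  have hz0 : ∀ j, j ≠ i → δ j ((δ i ^ n) y) = 0 := by
    intro j hj
    have hc : Commute (δ j) (δ i ^ n) := Commute.pow_right (hcomm j i) n
    rw [← Module.End.mul_apply, hc.eq, Module.End.mul_apply, hy0 j hj, map_zero]
  set z := (δ i ^ n) y
  obtain ⟨b, hb, -, hb1⟩ := hdiv (δ i z) (fun j => by
    by_cases hj : j = i
    · rw [hj]
      exact hn2
    · have hc := LinearMap.congr_fun (hcomm j i) z
      simp only [LinearMap.comp_apply] at hc
      rw [hc, hz0 j hj, map_zero]) hn1
  refine ⟨b * z, ?_, fun j hj => ?_⟩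
  · rw [hder i, hb i, zero_mul, zero_add, hb1]
  · rw [hder j, hb j, hz0 j hj, zero_mul, mul_zero, add_zero]
end
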